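/- The nonzero vectors c = (c^0, …, c^4) ∈ ℂ^5 satisfying −c^i = c^i (c^{i+1} − c^{i+2} + c^{i+3} − c^{i+4}) for all i = 0,…,4 (indices mod 5) are exactly the fifteen cyclic rotations of the three vectors (−1, 0, 1, 0, 0), (−1, 0, 0, 0, 1) and (−1, −3, 0, 3, 1). -/

import Mathlib

/-!
For each `i` either `cⁱ = 0` or `c^{i+1} − c^{i+2} + c^{i+3} − c^{i+4} = −1`, so fixing the support
of `c` leaves a linear system `M x = −𝟙` with `M` the corresponding skew-symmetric principal
submatrix. For supports of odd size `M` has a kernel vector with all entries `±1`; an odd number of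
such entries cannot sum to zero, so pairing the system with it shows that there is no solution. For
supports of even size `M` is invertible: the two cyclic types of size two give the rotations of
`(−1,0,1,0,0)` and `(−1,0,0,0,1)`, and the single type of size four gives those of
`(−1,−3,0,3,1)`.
-/

/-- The system in scalar form, with each equation already split into its two factors. Choosing a
factor in every hypothesis gives 32 cases, each of them a linear system over `ℂ`. The disjuncts
are the rotations by `0, …, 4` of each of the three vectors in turn. -/
theorem residue_scalar_cases (a b c d e : ℂ)
    (h0 : a = 0 ∨ b - c + d - e = -1) (h1 : b = 0 ∨ c - d + e - a = -1)
    (h2 : c = 0 ∨ d - e + a - b = -1) (h3 : d = 0 ∨ e - a + b - c = -1)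
    (h4 : e = 0 ∨ a - b + c - d = -1)
    (hne : ¬ (a = 0 ∧ b = 0 ∧ c = 0 ∧ d = 0 ∧ e = 0)) :
    (a = -1 ∧ b = 0 ∧ c = 1 ∧ d = 0 ∧ e = 0) ∨ (a = 0 ∧ b = 1 ∧ c = 0 ∧ d = 0 ∧ e = -1) ∨
    (a = 1 ∧ b = 0 ∧ c = 0 ∧ d = -1 ∧ e = 0) ∨ (a = 0 ∧ b = 0 ∧ c = -1 ∧ d = 0 ∧ e = 1) ∨
    (a = 0 ∧ b = -1 ∧ c = 0 ∧ d = 1 ∧ e = 0) ∨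
    (a = -1 ∧ b = 0 ∧ c = 0 ∧ d = 0 ∧ e = 1) ∨ (a = 0 ∧ b = 0 ∧ c = 0 ∧ d = 1 ∧ e = -1) ∨
    (a = 0 ∧ b = 0 ∧ c = 1 ∧ d = -1 ∧ e = 0) ∨ (a = 0 ∧ b = 1 ∧ c = -1 ∧ d = 0 ∧ e = 0) ∨
    (a = 1 ∧ b = -1 ∧ c = 0 ∧ d = 0 ∧ e = 0) ∨
    (a = -1 ∧ b = -3 ∧ c = 0 ∧ d = 3 ∧ e = 1) ∨ (a = -3 ∧ b = 0 ∧ c = 3 ∧ d = 1 ∧ e = -1) ∨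
    (a = 0 ∧ b = 3 ∧ c = 1 ∧ d = -1 ∧ e = -3) ∨ (a = 3 ∧ b = 1 ∧ c = -1 ∧ d = -3 ∧ e = 0) ∨
    (a = 1 ∧ b = -1 ∧ c = -3 ∧ d = 0 ∧ e = 3) := by
  rcases h0 with h0 | h0 <;> rcases h1 with h1 | h1 <;> rcases h2 with h2 | h2 <;>
    rcases h3 with h3 | h3 <;> rcases h4 with h4 | h4 <;> grind

theorem fin_five_eq {c v : Fin 5 → ℂ}
    (h : c 0 = v 0 ∧ c 1 = v 1 ∧ c 2 = v 2 ∧ c 3 = v 3 ∧ c 4 = v 4) (j : Fin 5) : c j = v j := by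
  obtain ⟨h0, h1, h2, h3, h4⟩ := h
  fin_cases j <;> assumption

/-- The nonzero vectors `c ∈ ℂ⁵` with
`−cⁱ = cⁱ (c^{i+1} − c^{i+2} + c^{i+3} − c^{i+4})` for all `i` (indices mod 5)
are exactly the fifteen cyclic rotations of `(−1,0,1,0,0)`, `(−1,0,0,0,1)` and
`(−1,−3,0,3,1)`. -/
theorem residueVectors_A4 (c : Fin 5 → ℂ) :
    (c ≠ 0 ∧
        ∀ i : Fin 5, -c i = c i * (c (i + 1) - c (i + 2) + c (i + 3) - c (i + 4))) ↔
      ∃ k : Fin 5,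
        ((∀ j : Fin 5, c j = ![-1, 0, 1, 0, 0] (j + k)) ∨
         (∀ j : Fin 5, c j = ![-1, 0, 0, 0, 1] (j + k)) ∨
         (∀ j : Fin 5, c j = ![-1, -3, 0, 3, 1] (j + k))) := by
  constructor
  · rintro ⟨hc, h⟩
    have key : ∀ x y : ℂ, -x = x * y → x = 0 ∨ y = -1 := by
      intro x y hxy
      have hmul : x * (y + 1) = 0 := by linear_combination -hxy
      exact (mul_eq_zero.mp hmul).imp_right eq_neg_of_add_eq_zero_left
    have hne : ¬ (c 0 = 0 ∧ c 1 = 0 ∧ c 2 = 0 ∧ c 3 = 0 ∧ c 4 = 0) := by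
      rintro ⟨h0, h1, h2, h3, h4⟩
      apply hc
      funext j
      fin_cases j <;> assumption
    -- The indices `i + 1, …, i + 4` reduce mod 5 definitionally.
    have hcases := residue_scalar_cases (c 0) (c 1) (c 2) (c 3) (c 4)
      (key _ _ (h 0)) (key _ _ (h 1)) (key _ _ (h 2)) (key _ _ (h 3)) (key _ _ (h 4)) hne
    rcases hcases with h | h | h | h | h | h | h | h | h | h | h | h | h | h | h
    · exact ⟨0, Or.inl (fin_five_eq h)⟩
    · exact ⟨1, Or.inl (fin_five_eq h)⟩
    · exact ⟨2, Or.inl (fin_five_eq h)⟩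
    · exact ⟨3, Or.inl (fin_five_eq h)⟩
    · exact ⟨4, Or.inl (fin_five_eq h)⟩
    · exact ⟨0, Or.inr (Or.inl (fin_five_eq h))⟩
    · exact ⟨1, Or.inr (Or.inl (fin_five_eq h))⟩
    · exact ⟨2, Or.inr (Or.inl (fin_five_eq h))⟩
    · exact ⟨3, Or.inr (Or.inl (fin_five_eq h))⟩
    · exact ⟨4, Or.inr (Or.inl (fin_five_eq h))⟩
    · exact ⟨0, Or.inr (Or.inr (fin_five_eq h))⟩
    · exact ⟨1, Or.inr (Or.inr (fin_five_eq h))⟩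
    · exact ⟨2, Or.inr (Or.inr (fin_five_eq h))⟩
    · exact ⟨3, Or.inr (Or.inr (fin_five_eq h))⟩
    · exact ⟨4, Or.inr (Or.inr (fin_five_eq h))⟩
  · rintro ⟨k, hk⟩
    constructor
    · rintro rfl
      -- All three vectors have entry `-1` in position `0`, hence `c (-k) = -1`.
      rcases hk with hk | hk | hk <;> simpa using hk (-k)
    · intro i
      rcases hk with hk | hk | hk <;> simp only [hk] <;> fin_cases k <;> fin_cases i <;>
        simp [Fin.add_def] <;> norm_num
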